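/- Every finite simple graph with no K_{3,3} minor is generically 4-stress free. -/

import Mathlib

open scoped Classical

/-- `H` is a minor of `G`: there is a family of pairwise disjoint nonempty connected
"branch sets" in `G`, one for each vertex of `H`, such that every edge of `H` is
realized by an edge of `G` between the corresponding branch sets. -/
def HasMinor {V W : Type*} (G : SimpleGraph V) (H : SimpleGraph W) : Prop :=
  ∃ B : W → Set V,
    (∀ i, (B i).Nonempty) ∧
    (∀ i j, i ≠ j → Disjoint (B i) (B j)) ∧
    (∀ i, (G.induce (B i)).Connected) ∧
    (∀ i j, H.Adj i j → ∃ x ∈ B i, ∃ y ∈ B j, G.Adj x y)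

/-- `w : E(G) → ℝ` is a stress of the embedding `f : V → ℝ^d`. -/
noncomputable def IsStress {V : Type*} [Fintype V] (G : SimpleGraph V) (d : ℕ)
    (f : V → EuclideanSpace ℝ (Fin d)) (w : G.edgeSet → ℝ) : Prop :=
  ∀ v : V,
    (∑ u : V, if h : G.Adj v u then w ⟨s(v, u), G.mem_edgeSet.mpr h⟩ • (f v - f u) else 0) = 0

/-- The set of `d`-embeddings of `G` whose only stress is the zero function. -/
def StressFreeEmbeddings {V : Type*} [Fintype V] (G : SimpleGraph V) (d : ℕ) :
    Set (V → EuclideanSpace ℝ (Fin d)) :=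
  {f | ∀ w : G.edgeSet → ℝ, IsStress G d f w → w = 0}

/-- `G` is generically `d`-stress free: the set of `d`-embeddings with no nonzero
stress is open and dense in the space of all `d`-embeddings. -/
def GenericallyStressFree {V : Type*} [Fintype V] (G : SimpleGraph V) (d : ℕ) : Prop :=
  IsOpen (StressFreeEmbeddings G d) ∧ Dense (StressFreeEmbeddings G d)

/-!
Stress-freeness is the injectivity of a linear map depending linearly on the embedding, hence it
holds on an open dense set as soon as it holds for one embedding. If the edge `uv` has fewer than
`d` common neighbours, a stress-free embedding of `G / uv` yields one of `G` by Whiteley's vertex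
splitting: perturb it so that the edge vectors from `u` to the common neighbours are independent,
then place `v` infinitesimally close to `u` in a direction outside their span. Contractions of `G`
have no `K_{3,3}` minor either, so it remains to find an edge with at most three common neighbours.
Otherwise every neighbourhood would induce a graph of minimum degree at least four; Pósa rotation
of a longest path finds a `K_{2,3}` minor there, and the centre of the neighbourhood extends it to
a `K_{3,3}` minor.
-/

open Function

section InjectiveFamilies

variable {𝕜 F X Y : Type*} [NontriviallyNormedField 𝕜]
  [AddCommGroup F] [Module 𝕜 F] [TopologicalSpace F] [ContinuousSMul 𝕜 F]

theorem isOpen_setOf_injective [CompleteSpace 𝕜] [IsTopologicalAddGroup F] [T2Space F]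
    [FiniteDimensional 𝕜 F] [NormedAddCommGroup X] [NormedSpace 𝕜 X] [FiniteDimensional 𝕜 X]
    [NormedAddCommGroup Y] [NormedSpace 𝕜 Y] (Φ : F →ₗ[𝕜] X →ₗ[𝕜] Y) :
    IsOpen {x | Injective (Φ x)} :=
  ContinuousLinearMap.isOpen_injective.preimage
    (LinearMap.toContinuousLinearMap.toLinearMap ∘ₗ Φ).continuous_of_finiteDimensional

/-- If `L` is a left inverse of `Φ x₀`, then `Φ (x + s • x₀)` is injective unless `-s` is one of
the finitely many eigenvalues of `L ∘ₗ Φ x`. -/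
theorem dense_setOf_injective [ContinuousAdd F] [AddCommGroup X] [Module 𝕜 X]
    [FiniteDimensional 𝕜 X] [AddCommGroup Y] [Module 𝕜 Y]
    (Φ : F →ₗ[𝕜] X →ₗ[𝕜] Y) {x₀ : F} (hx₀ : Injective (Φ x₀)) :
    Dense {x | Injective (Φ x)} := by
  intro x
  obtain ⟨L, hL⟩ := (Φ x₀).exists_leftInverse_of_injective (LinearMap.ker_eq_bot.2 hx₀)
  have hinj {s : 𝕜} (hs : ¬ Module.End.HasEigenvalue (L ∘ₗ Φ x) (-s)) :
      Injective (Φ (x + s • x₀)) := by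
    refine (injective_iff_map_eq_zero _).2 fun a ha => by_contra fun ha₀ => hs ?_
    refine Module.End.hasEigenvalue_of_hasEigenvector (x := a)
      ⟨Module.End.mem_eigenspace_iff.2 ?_, ha₀⟩
    have hLa : L (Φ x₀ a) = a := LinearMap.congr_fun hL a
    have hsum : L (Φ x a) + s • a = 0 := by
      simpa [hLa] using congrArg L ha
    simpa using eq_neg_of_add_eq_zero_left hsum
  have hdense : Dense {s | ¬ Module.End.HasEigenvalue (L ∘ₗ Φ x) (-s)} := by
    have hfinite := (Module.End.finite_hasEigenvalue (L ∘ₗ Φ x)).preimage neg_injective.injOn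
    have hcompl := dense_univ.sdiff_finite hfinite
    rwa [← Set.compl_eq_univ_sdiff] at hcompl
  simpa using map_mem_closure (by fun_prop : Continuous fun s : 𝕜 => x + s • x₀) (hdense 0)
    fun s hs => hinj hs

end InjectiveFamilies

section Differences

variable {V E : Type*} [AddCommGroup E] [Module ℝ E]

/-- The edge vectors `f x - f y` of an embedding, as a linear function of `f`. -/
def differences : (V → E) →ₗ[ℝ] V → V → E where
  toFun f x y := f x - f y
  map_add' f g := by ext x y; simp [add_sub_add_comm]
  map_smul' c f := by ext x y; simp [smul_sub]

@[simp]
theorem differences_apply (f : V → E) (x y : V) :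
    differences f x y = f x - f y := rfl

end Differences

section Stresses

variable {V E : Type*} [Fintype V]

/-- A stress written as a symmetric matrix `ω` supported on the edges of `G`, in equilibrium with
respect to an arbitrary assignment `D` of vectors to ordered pairs of vertices; `D = differences f`
gives the stresses of `f`. -/
structure IsEquilibriumStress [AddCommMonoid E] [Module ℝ E] (G : SimpleGraph V) (D : V → V → E)
    (ω : V → V → ℝ) : Prop where
  symm : ∀ x y, ω x y = ω y x
  eq_zero_of_not_adj : ∀ {x y}, ¬ G.Adj x y → ω x y = 0
  equilibrium : ∀ x, ∑ y, ω x y • D x y = 0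

/-- The only stress of `G` with respect to the vectors `D` is zero. -/
def StressFree [AddCommMonoid E] [Module ℝ E] (G : SimpleGraph V) (D : V → V → E) : Prop :=
  ∀ ω, IsEquilibriumStress G D ω → ω = 0

/-- The symmetric matrices supported on the edges of `G`. -/
def edgeWeights (G : SimpleGraph V) : Submodule ℝ (V → V → ℝ) where
  carrier := {ω | (∀ x y, ω x y = ω y x) ∧ ∀ x y, ¬ G.Adj x y → ω x y = 0}
  zero_mem' := by simp
  add_mem' := by
    rintro ω η ⟨hω, hω₀⟩ ⟨hη, hη₀⟩
    exact ⟨fun x y => by simp [hω x y, hη x y], fun x y h => by simp [hω₀ x y h, hη₀ x y h]⟩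
  smul_mem' := by
    rintro c ω ⟨hω, hω₀⟩
    exact ⟨fun x y => by simp [hω x y], fun x y h => by simp [hω₀ x y h]⟩

/-- The net force at each vertex, as a bilinear function of the edge vectors and the weights. -/
def netForce [AddCommMonoid E] [Module ℝ E] (G : SimpleGraph V) :
    (V → V → E) →ₗ[ℝ] edgeWeights G →ₗ[ℝ] V → E :=
  LinearMap.mk₂ ℝ (fun D ω x => ∑ y, ω.1 x y • D x y)
    (fun D D' ω => by ext x; simp [smul_add, Finset.sum_add_distrib])
    (fun c D ω => by ext x; simp [Finset.smul_sum, smul_comm c])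
    (fun D ω η => by ext x; simp [add_smul, Finset.sum_add_distrib])
    (fun c D ω => by ext x; simp [Finset.smul_sum, mul_smul])

theorem stressFree_iff_injective_netForce [AddCommGroup E] [Module ℝ E] {G : SimpleGraph V}
    {D : V → V → E} : StressFree G D ↔ Injective (netForce G D) := by
  rw [injective_iff_map_eq_zero]
  refine ⟨fun h ω hω => Subtype.ext (h ω ⟨ω.2.1, ω.2.2 _ _, congrFun hω⟩), fun h ω hω => ?_⟩
  exact congrArg Subtype.val
    (h ⟨ω, hω.symm, fun _ _ => hω.eq_zero_of_not_adj⟩ (funext hω.equilibrium))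

theorem StressFree.of_smul [AddCommMonoid E] [Module ℝ E] {G : SimpleGraph V} {D : V → V → E}
    {c : V → V → ℝ} (hsymm : ∀ x y, c x y = c y x) (hne : ∀ x y, c x y ≠ 0)
    (h : StressFree G fun x y => c x y • D x y) : StressFree G D := by
  intro ω hω
  have hdiv := h (fun x y => ω x y / c x y)
    ⟨fun x y => by rw [hω.symm, hsymm], fun hxy => by rw [hω.eq_zero_of_not_adj hxy, zero_div],
      fun x => by simpa only [smul_smul, div_mul_cancel₀ _ (hne _ _)] using hω.equilibrium x⟩
  ext x y
  simpa [hne x y] using congrFun₂ hdiv x y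

theorem isOpen_setOf_stressFree [NormedAddCommGroup E] [NormedSpace ℝ E] [FiniteDimensional ℝ E]
    (G : SimpleGraph V) : IsOpen {D : V → V → E | StressFree G D} := by
  simp only [stressFree_iff_injective_netForce]
  exact isOpen_setOf_injective (X := edgeWeights G) (Y := V → E) (netForce G)

theorem mem_stressFreeEmbeddings_iff {G : SimpleGraph V} {d : ℕ}
    {f : V → EuclideanSpace ℝ (Fin d)} :
    f ∈ StressFreeEmbeddings G d ↔ StressFree G (differences f) := by
  constructor
  · intro hf ω hω
    let w : G.edgeSet → ℝ := fun e => Sym2.lift ⟨ω, hω.symm⟩ e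
    have hw : w = 0 := hf w fun x => by
      refine (Finset.sum_congr rfl fun y _ => ?_).trans (hω.equilibrium x)
      split_ifs with hxy
      · rfl
      · rw [hω.eq_zero_of_not_adj hxy, zero_smul]
    ext x y
    by_cases hxy : G.Adj x y
    · exact congrFun hw ⟨s(x, y), hxy⟩
    · exact hω.eq_zero_of_not_adj hxy
  · intro hf w hw
    let ω : V → V → ℝ := fun x y => if hxy : G.Adj x y then w ⟨s(x, y), hxy⟩ else 0
    have hω : ω = 0 := hf ω
      { symm := fun x y => by simp only [ω, G.adj_comm x y, Sym2.eq_swap (a := x)]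
        eq_zero_of_not_adj := fun hxy => dif_neg hxy
        equilibrium := fun x => by
          simpa only [ω, dite_smul, zero_smul, differences_apply] using hw x }
    ext ⟨e, he⟩
    induction e with | _ x y
    simpa [ω, show G.Adj x y from he] using congrFun₂ hω x y

theorem genericallyStressFree_iff_nonempty {G : SimpleGraph V} {d : ℕ} :
    GenericallyStressFree G d ↔ (StressFreeEmbeddings G d).Nonempty := by
  have hset : StressFreeEmbeddings G d = {f | Injective ((netForce G ∘ₗ differences) f)} :=
    Set.ext fun f => mem_stressFreeEmbeddings_iff.trans stressFree_iff_injective_netForce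
  rw [GenericallyStressFree, hset]
  exact ⟨fun h => h.2.nonempty,
    fun ⟨_, hf⟩ => ⟨isOpen_setOf_injective _, dense_setOf_injective _ hf⟩⟩

theorem genericallyStressFree_bot (d : ℕ) : GenericallyStressFree (⊥ : SimpleGraph V) d := by
  refine genericallyStressFree_iff_nonempty.2 ⟨0, mem_stressFreeEmbeddings_iff.2 fun ω hω => ?_⟩
  ext x y
  exact hω.eq_zero_of_not_adj id

end Stresses

section BlowUp

variable {V W E : Type*} [AddCommGroup E] [Module ℝ E]

/-- The edge vectors of the embedding `f ∘ π`, with the zero vectors inside the fibres of `π`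
replaced by the edge vectors of `h`: up to rescaling, the limit as `t → 0` of the edge vectors of
`f ∘ π + t • h`. -/
noncomputable def blowUp (π : V → W) (f : W → E) (h : V → E) (x y : V) : E :=
  differences (f ∘ π) x y + if π x = π y then differences h x y else 0

theorem differences_add_smul_eq_blowUp (π : V → W) (f : W → E) (h : V → E) (t : ℝ) (x y : V) :
    differences (f ∘ π + t • h) x y = (if π x = π y then t else 1) •
      (blowUp π f h x y + if π x = π y then 0 else t • differences h x y) := by
  by_cases hxy : π x = π y <;> simp [blowUp, hxy, smul_sub, add_sub_add_comm]

theorem StressFree.exists_of_blowUp {E : Type*} [NormedAddCommGroup E] [NormedSpace ℝ E]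
    [FiniteDimensional ℝ E] [Fintype V] {G : SimpleGraph V} {π : V → W} {f : W → E} {h : V → E}
    (hfree : StressFree G (blowUp π f h)) : ∃ g : V → E, StressFree G (differences g) := by
  let D (t : ℝ) (x y : V) : E :=
    blowUp π f h x y + if π x = π y then 0 else t • differences h x y
  have hcont : Continuous D := by
    refine continuous_pi fun x => continuous_pi fun y => continuous_const.add ?_
    split_ifs <;> fun_prop
  have hnear : ∀ᶠ t in nhds 0, StressFree G (D t) :=
    hcont.continuousAt.eventually ((isOpen_setOf_stressFree G).mem_nhds (by simpa [D] using hfree))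
  obtain ⟨t, hfree_t, ht⟩ :=
    ((hnear.filter_mono nhdsWithin_le_nhds).and self_mem_nhdsWithin : ∀ᶠ t in nhdsWithin 0 {0}ᶜ,
      StressFree G (D t) ∧ t ≠ 0).exists
  have hc (x y : V) : (if π x = π y then t else 1) ≠ 0 := by split_ifs <;> simp [ht]
  refine ⟨f ∘ π + t • h, StressFree.of_smul (c := fun x y => (if π x = π y then t else 1)⁻¹)
    (fun x y => by simp only [eq_comm]) (fun x y => inv_ne_zero (hc x y)) ?_⟩
  simpa only [differences_add_smul_eq_blowUp, inv_smul_smul₀ (hc _ _)] using hfree_t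

/-- The stress induced on `G.map π` by a stress `ω` on `G`, obtained by summing over parallel
edges. -/
noncomputable def pushforwardStress [Fintype V] (π : V → W) (ω : V → V → ℝ) (a b : W) : ℝ :=
  if a = b then 0 else ∑ x with π x = a, ∑ y with π y = b, ω x y

/-- The forces along the edges inside a fibre cancel in the sum over the fibre. -/
theorem IsEquilibriumStress.pushforward [Fintype V] [Fintype W] {G : SimpleGraph V} {π : V → W}
    {f : W → E} {h : V → E} {ω : V → V → ℝ} (hω : IsEquilibriumStress G (blowUp π f h) ω) :
    IsEquilibriumStress (G.map π) (differences f) (pushforwardStress π ω) where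
  symm a b := by
    simp only [pushforwardStress, eq_comm (a := a), Finset.sum_comm (s := {x | π x = a}),
      hω.symm]
  eq_zero_of_not_adj {a b} hab := by
    unfold pushforwardStress
    split_ifs with hne
    · rfl
    refine Finset.sum_eq_zero fun x hx => Finset.sum_eq_zero fun y hy => ?_
    refine hω.eq_zero_of_not_adj fun hxy => hab ⟨hne, x, y, hxy, ?_, ?_⟩ <;> simp_all
  equilibrium a := by
    have hinside : ∑ x with π x = a, ∑ y with π y = a, ω x y • differences h x y = 0 := by
      simp only [differences_apply, smul_sub, Finset.sum_sub_distrib, sub_eq_zero]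
      rw [Finset.sum_comm]
      simp only [hω.symm]
    calc ∑ b, pushforwardStress π ω a b • differences f a b
        = ∑ b, ∑ x with π x = a, ∑ y with π y = b, ω x y • differences (f ∘ π) x y := by
          refine Finset.sum_congr rfl fun b _ => ?_
          by_cases hab : a = b
          · subst hab
            rw [differences_apply, sub_self, smul_zero]
            refine (Finset.sum_eq_zero fun x hx => Finset.sum_eq_zero fun y hy => ?_).symm
            simp_all
          · simp only [pushforwardStress, if_neg hab, Finset.sum_smul]
            refine Finset.sum_congr rfl fun x hx => Finset.sum_congr rfl fun y hy => ?_
            simp_all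
      _ = ∑ x with π x = a, ∑ y, ω x y • differences (f ∘ π) x y := by
          rw [Finset.sum_comm]
          exact Finset.sum_congr rfl fun x _ => Finset.sum_fiberwise _ _ _
      _ = ∑ x with π x = a, ∑ y, ω x y • blowUp π f h x y := by
          simp only [blowUp, smul_add, Finset.sum_add_distrib, smul_ite, smul_zero]
          refine left_eq_add.2 (Eq.trans (Finset.sum_congr rfl fun x hx => ?_) hinside)
          simp only [Finset.sum_filter, (Finset.mem_filter.1 hx).2, eq_comm]
      _ = 0 := Finset.sum_eq_zero fun x _ => hω.equilibrium x

end BlowUp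

section VertexSplitting

variable {V E : Type*} [AddCommGroup E] [Module ℝ E]

/-- The contraction of the edge `uv` of `G`, on the same vertex set: the edges at `v` are moved
to `u`, and `v` becomes isolated. -/
noncomputable def contractEdge (G : SimpleGraph V) (u v : V) : SimpleGraph V :=
  G.map (update id v u)

theorem pushforwardStress_update_self [Fintype V] {u v y : V} (ω : V → V → ℝ) (huv : u ≠ v)
    (hyu : y ≠ u) (hyv : y ≠ v) :
    pushforwardStress (update id v u) ω u y = ω u y + ω v y := by
  have hfib_u : ({x | update id v u x = u} : Finset V) = {u, v} := by
    ext x; grind [update_apply]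
  have hfib_y : ({x | update id v u x = y} : Finset V) = {y} := by
    ext x; grind [update_apply]
  simp [pushforwardStress, hyu.symm, hfib_u, hfib_y, Finset.sum_pair huv]

theorem pushforwardStress_update_of_ne [Fintype V] {u v x y : V} (ω : V → V → ℝ)
    (hxy : x ≠ y) (hxu : x ≠ u) (hxv : x ≠ v) (hyu : y ≠ u) (hyv : y ≠ v) :
    pushforwardStress (update id v u) ω x y = ω x y := by
  have hfib {z : V} (hzu : z ≠ u) (hzv : z ≠ v) :
      ({x | update id v u x = z} : Finset V) = {z} := by
    ext x; grind [update_apply]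
  simp [pushforwardStress, hxy, hfib hxu hxv, hfib hyu hyv]

/-- The induced stress on `G / uv` is zero, so the weights of the edges from `u` and `v` to a third
vertex are opposite, and equilibrium at `v` only involves `u` and the common neighbours. -/
theorem StressFree.blowUp_of_contractEdge [Fintype V] {G : SimpleGraph V} {u v : V} {f h : V → E}
    (huv : u ≠ v) (hfree : StressFree (contractEdge G u v) (differences f))
    (hind : LinearIndepOn ℝ (blowUp (update id v u) f h v) (insert u (G.commonNeighbors u v))) :
    StressFree G (blowUp (update id v u) f h) := by
  intro ω hω
  have hpush := hfree _ hω.pushforward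
  have hrest {x y : V} (hxu : x ≠ u) (hxv : x ≠ v) (hyu : y ≠ u) (hyv : y ≠ v) : ω x y = 0 := by
    obtain rfl | hxy := eq_or_ne x y
    · exact hω.eq_zero_of_not_adj G.irrefl
    · rw [← pushforwardStress_update_of_ne ω hxy hxu hxv hyu hyv, hpush]; rfl
  have hopp {y : V} (hyu : y ≠ u) (hyv : y ≠ v) : ω u y + ω v y = 0 := by
    rw [← pushforwardStress_update_self ω huv hyu hyv, hpush]; rfl
  have hsupport (y : V) (hy : ω v y ≠ 0) : y ∈ insert u (G.commonNeighbors u v) := by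
    have hvy : G.Adj v y := not_imp_comm.1 hω.eq_zero_of_not_adj hy
    refine or_iff_not_imp_left.2 fun hyu => ⟨not_imp_comm.1 hω.eq_zero_of_not_adj ?_, hvy⟩
    rwa [eq_neg_of_add_eq_zero_left (hopp hyu hvy.ne'), neg_eq_zero]
  have hv (y : V) : ω v y = 0 := by
    by_contra hy
    refine hy (linearIndepOn_iff'.1 hind {y | ω v y ≠ 0} (ω v) (fun y hy => ?_) ?_ y
      (by simpa using hy))
    · exact hsupport y (by simpa using hy)
    · rw [← hω.equilibrium v, Finset.sum_filter_of_ne]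
      exact fun y _ hne hy => hne (by rw [hy, zero_smul])
  have hu (y : V) : ω u y = 0 := by
    obtain rfl | hyv := eq_or_ne y v
    · rw [hω.symm, hv]
    obtain rfl | hyu := eq_or_ne y u
    · exact hω.eq_zero_of_not_adj G.irrefl
    · simpa [hv] using hopp hyu hyv
  ext x y
  by_cases hx : x = u ∨ x = v
  · rcases hx with rfl | rfl <;> simp [hu, hv]
  by_cases hy : y = u ∨ y = v
  · rw [hω.symm]
    rcases hy with rfl | rfl <;> simp [hu, hv]
  · push Not at hx hy
    exact hrest hx.1 hx.2 hy.1 hy.2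

theorem dense_setOf_linearIndepOn_sub [TopologicalSpace E] [ContinuousAdd E] [ContinuousSMul ℝ E]
    {a : V} {s : Set V} (hs : s.Finite) (ha : a ∉ s)
    (hcard : s.ncard ≤ Module.finrank ℝ E) :
    Dense {f : V → E | LinearIndepOn ℝ (fun y => f a - f y) s} := by
  have := hs.fintype
  obtain ⟨b₀, hb₀⟩ := exists_linearIndependent_of_le_finrank hcard
  let e : s ≃ Fin s.ncard := Finite.equivFinOfCardEq (Nat.card_coe_set_eq s)
  let Φ : (V → E) →ₗ[ℝ] (s → ℝ) →ₗ[ℝ] E := Fintype.bilinearCombination ℝ ℝ ∘ₗ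
    LinearMap.funLeft ℝ E ((↑) : s → V) ∘ₗ LinearMap.proj a ∘ₗ differences
  have hΦ (f : V → E) : LinearIndepOn ℝ (fun y => f a - f y) s ↔ Injective (Φ f) :=
    linearIndependent_iff_injective_fintypeLinearCombination
  simp only [hΦ]
  refine dense_setOf_injective Φ (x₀ := fun y => if hy : y ∈ s then -b₀ (e ⟨y, hy⟩) else 0) ?_
  rw [← hΦ]
  simpa [LinearIndepOn, ha, comp_def] using hb₀.comp e e.injective

theorem exists_notMem_span_of_ncard_lt_finrank {K E : Type*} [DivisionRing K] [AddCommGroup E]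
    [Module K E] {s : Set E} (hs : s.Finite) (hcard : s.ncard < Module.finrank K E) :
    ∃ p, p ∉ Submodule.span K s := by
  have := hs.fintype
  contrapose! hcard
  rw [← finrank_top, ← Submodule.eq_top_iff'.2 hcard, Set.ncard_eq_toFinset_card']
  exact finrank_span_le_card s

theorem GenericallyStressFree.of_contractEdge [Fintype V] {G : SimpleGraph V} {u v : V} {d : ℕ}
    (huv : u ≠ v) (hcard : (G.commonNeighbors u v).ncard < d)
    (hfree : GenericallyStressFree (contractEdge G u v) d) : GenericallyStressFree G d := by
  let C := G.commonNeighbors u v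
  have hu : u ∉ C := G.notMem_commonNeighbors_left u v
  have hv : v ∉ C := G.notMem_commonNeighbors_right u v
  obtain ⟨f, hf, (hind : LinearIndepOn ℝ (fun y => f u - f y) C)⟩ :=
    (dense_setOf_linearIndepOn_sub C.toFinite hu (by simpa using hcard.le)).inter_open_nonempty
      _ hfree.1 hfree.2.nonempty
  obtain ⟨p, hp⟩ : ∃ p, p ∉ Submodule.span ℝ ((fun y => f u - f y) '' C) :=
    exists_notMem_span_of_ncard_lt_finrank (C.toFinite.image _)
      (by simpa using (Set.ncard_image_le C.toFinite).trans_lt hcard)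
  let D := blowUp (update id v u) f (Pi.single v p)
  have hD_u : D v u = p := by simp [D, blowUp, huv]
  have hD : Set.EqOn (fun y => f u - f y) (D v) C := fun y hy => by
    have hyu : u ≠ y := fun h => hu (h ▸ hy)
    have hyv : y ≠ v := fun h => hv (h ▸ hy)
    simp [D, blowUp, hyu, hyv]
  have hsplit : LinearIndepOn ℝ (D v) (insert u C) := by
    rw [linearIndepOn_insert hu, hD_u, ← hD.image_eq]
    exact ⟨LinearIndepOn.congr hind hD, hp⟩
  have hblow :=
    StressFree.blowUp_of_contractEdge huv (mem_stressFreeEmbeddings_iff.1 hf) hsplit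
  obtain ⟨g, hg⟩ := hblow.exists_of_blowUp
  exact genericallyStressFree_iff_nonempty.2 ⟨g, mem_stressFreeEmbeddings_iff.2 hg⟩

end VertexSplitting

section Minors

variable {V W : Type*} {G : SimpleGraph V} {H : SimpleGraph W}

theorem connected_induce_preimage_of_map {U : Type*} {π : V → U} {s : Set U}
    (hπ : ∀ a, (G.induce (π ⁻¹' {a})).Preconnected) (hs : ((G.map π).induce s).Preconnected)
    (hne : (π ⁻¹' s).Nonempty) : (G.induce (π ⁻¹' s)).Connected := by
  have hfibre {x y : V} (hx : π x ∈ s) (hy : π y ∈ s) (hxy : π x = π y) :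
      (G.induce (π ⁻¹' s)).Reachable ⟨x, hx⟩ ⟨y, hy⟩ :=
    (hπ (π y) ⟨x, hxy⟩ ⟨y, rfl⟩).map (G.induceHomOfLE fun z (hz : π z = π y) =>
      show π z ∈ s from hz ▸ hy).toHom
  have hwalk {a b : s} (p : ((G.map π).induce s).Walk a b) (x y : V) (hx : π x = a)
      (hy : π y = b) : (G.induce (π ⁻¹' s)).Reachable ⟨x, by simp [hx]⟩ ⟨y, by simp [hy]⟩ := by
    induction p generalizing x with
    | nil => exact hfibre _ _ (hx.trans hy.symm)
    | @cons a c b hac _ ih =>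
      obtain ⟨-, x', z, hadj, hx', hz⟩ := hac
      have hedge : (G.induce (π ⁻¹' s)).Adj ⟨x', by simp [hx']⟩ ⟨z, by simp [hz]⟩ := hadj
      exact (hfibre _ _ (hx.trans hx'.symm)).trans (hedge.reachable.trans (ih z hz hy))
  have := hne.to_subtype
  exact ⟨fun x y => (hs ⟨π x, x.2⟩ ⟨π y, y.2⟩).elim fun p => hwalk p x y rfl rfl⟩

theorem HasMinor.of_map {U : Type*} {π : V → U}
    (hπ : ∀ a, (G.induce (π ⁻¹' {a})).Preconnected) (hH : ∀ i, ∃ j, H.Adj i j)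
    (h : HasMinor (G.map π) H) : HasMinor G H := by
  obtain ⟨B, -, hdisj, hconn, hadj⟩ := h
  have hadj' {i j : W} (hij : H.Adj i j) :
      ∃ x ∈ π ⁻¹' B i, ∃ y ∈ π ⁻¹' B j, G.Adj x y := by
    obtain ⟨_, hx, _, hy, -, x, y, hxy, rfl, rfl⟩ := hadj i j hij
    exact ⟨x, hx, y, hy, hxy⟩
  have hne (i : W) : (π ⁻¹' B i).Nonempty := by
    obtain ⟨j, hij⟩ := hH i
    obtain ⟨x, hx, -⟩ := hadj' hij
    exact ⟨x, hx⟩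
  exact ⟨fun i => π ⁻¹' B i, hne, fun i j hij => (hdisj i j hij).preimage π,
    fun i => connected_induce_preimage_of_map hπ (hconn i).preconnected (hne i),
    fun i j => hadj'⟩

theorem HasMinor.of_contractEdge {u v : V} (huv : G.Adj u v) (hH : ∀ i, ∃ j, H.Adj i j)
    (h : HasMinor (contractEdge G u v) H) : HasMinor G H := by
  refine h.of_map (fun a => ?_) hH
  rintro ⟨x, hx⟩ ⟨y, hy⟩
  obtain rfl | hxy := eq_or_ne x y
  · rfl
  · have hadj : G.Adj x y := by
      have := huv.symm
      simp only [Set.mem_preimage, Set.mem_singleton_iff, update_apply, id] at hx hy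
      grind
    exact SimpleGraph.Adj.reachable (G := G.induce _) hadj

theorem hasMinor_completeBipartiteGraph {α β : Type*} {B : α ⊕ β → Set V}
    (hdisj : Pairwise (Disjoint on B)) (hconn : ∀ i, (G.induce (B i)).Connected)
    (hadj : ∀ a b, ∃ x ∈ B (.inl a), ∃ y ∈ B (.inr b), G.Adj x y) :
    HasMinor G (completeBipartiteGraph α β) := by
  refine ⟨B, fun i => Set.nonempty_coe_sort.1 (hconn i).nonempty, fun i j => @hdisj i j, hconn, ?_⟩
  rintro (a | b) (a' | b') hij
  · simp at hij
  · exact hadj a b'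
  · obtain ⟨x, hx, y, hy, hxy⟩ := hadj a' b
    exact ⟨y, hy, x, hx, hxy.symm⟩
  · simp at hij

theorem connected_induce_image_val {s : Set V} {t : Set s}
    (ht : ((G.induce s).induce t).Connected) : (G.induce (Subtype.val '' t)).Connected := by
  refine ht.map ⟨fun x => ⟨x.1, x.1, x.2, rfl⟩, id⟩ ?_
  rintro ⟨_, x, hx, rfl⟩
  exact ⟨⟨x, hx⟩, rfl⟩

theorem HasMinor.cone {z : V} {m : ℕ} {β : Type*}
    (h : HasMinor (G.induce (G.neighborSet z)) (completeBipartiteGraph (Fin m) β)) :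
    HasMinor G (completeBipartiteGraph (Fin (m + 1)) β) := by
  obtain ⟨B, hne, hdisj, hconn, hadj⟩ := h
  let I (i : Fin m ⊕ β) : Set V := Subtype.val '' B i
  have hz (i) : z ∉ I i := by
    rintro ⟨x, -, hx⟩
    exact G.ne_of_adj x.2 hx.symm
  have hdisj_image {i j} (hij : i ≠ j) : Disjoint (I i) (I j) :=
    (Set.disjoint_image_iff Subtype.val_injective).2 (hdisj i j hij)
  refine hasMinor_completeBipartiteGraph
    (B := Sum.elim (Fin.cons {z} fun a => I (.inl a)) fun b => I (.inr b)) ?_ ?_ ?_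
  · rintro (a | b) (a' | b') hij
    · cases a using Fin.cases <;> cases a' using Fin.cases
      · exact absurd rfl hij
      · exact Set.disjoint_singleton_left.2 (hz _)
      · exact Set.disjoint_singleton_right.2 (hz _)
      · exact hdisj_image (by simpa using hij)
    · cases a using Fin.cases
      · exact Set.disjoint_singleton_left.2 (hz _)
      · exact hdisj_image Sum.inl_ne_inr
    · cases a' using Fin.cases
      · exact Set.disjoint_singleton_right.2 (hz _)
      · exact hdisj_image Sum.inr_ne_inl
    · exact hdisj_image (by simpa using hij)
  · rintro (a | b)
    · cases a using Fin.cases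
      · change (G.induce {z}).Connected
        rw [SimpleGraph.induce_singleton_eq_top]
        exact SimpleGraph.connected_top
      · exact connected_induce_image_val (hconn _)
    · exact connected_induce_image_val (hconn _)
  · intro a b
    obtain ⟨y, hy⟩ := hne (.inr b)
    cases a using Fin.cases with
    | zero => exact ⟨z, rfl, y, ⟨y, hy, rfl⟩, y.2⟩
    | succ a =>
      obtain ⟨x, hx, y, hy, hxy⟩ := hadj (.inl a) (.inr b) (by simp)
      exact ⟨x, ⟨x, hx, rfl⟩, y, ⟨y, hy, rfl⟩, hxy⟩

end Minors

section PathRotation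

variable {V : Type*} {G : SimpleGraph V} {s t : V}

theorem connected_induce_getVert_image_Icc (p : G.Walk s t) {l r : ℕ} (hlr : l ≤ r)
    (hr : r ≤ p.length) : (G.induce (p.getVert '' Set.Icc l r)).Connected := by
  have hsupport : p.getVert '' Set.Icc l r = {v | v ∈ ((p.drop l).take (r - l)).support} := by
    ext v
    simp only [Set.mem_image, Set.mem_Icc, Set.mem_ofPred_eq,
      SimpleGraph.Walk.mem_support_iff_exists_getVert, SimpleGraph.Walk.take_getVert,
      SimpleGraph.Walk.drop_getVert, SimpleGraph.Walk.take_length, SimpleGraph.Walk.drop_length]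
    constructor
    · rintro ⟨n, ⟨hln, hnr⟩, rfl⟩
      exact ⟨n - l, by congr 1; omega, by omega⟩
    · rintro ⟨n, rfl, _⟩
      exact ⟨_, by omega, rfl⟩
  rw [hsupport]
  exact SimpleGraph.Walk.connected_induce_support _

theorem hasMinor_of_path_intervals {α β : Type*} {p : G.Walk s t} (hp : p.IsPath)
    {l r : α ⊕ β → ℕ} (hlr : ∀ i, l i ≤ r i) (hr : ∀ i, r i ≤ p.length)
    (hdisj : Pairwise fun i j => r i < l j ∨ r j < l i)
    (hadj : ∀ a b, ∃ m ∈ Set.Icc (l (.inl a)) (r (.inl a)),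
      ∃ n ∈ Set.Icc (l (.inr b)) (r (.inr b)), G.Adj (p.getVert m) (p.getVert n)) :
    HasMinor G (completeBipartiteGraph α β) := by
  refine hasMinor_completeBipartiteGraph (B := fun i => p.getVert '' Set.Icc (l i) (r i))
    (fun i j hij => ?_) (fun i => connected_induce_getVert_image_Icc p (hlr i) (hr i))
    fun a b => ?_
  · refine (Set.disjoint_left.2 fun n hi hj => ?_ : Disjoint (Set.Icc (l i) (r i)) _).image
      hp.getVert_injOn (fun n hn => hn.2.trans (hr i)) (fun n hn => hn.2.trans (hr j))
    have := hdisj hij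
    simp only [Set.mem_Icc] at hi hj
    omega
  · obtain ⟨m, hm, n, hn, hmn⟩ := hadj a b
    exact ⟨_, ⟨m, hm, rfl⟩, _, ⟨n, hn, rfl⟩, hmn⟩

/-- A path of maximal length among all paths of the graph. -/
structure IsLongestPath (p : G.Walk s t) : Prop where
  isPath : p.IsPath
  length_le : ∀ {s' t' : V} (q : G.Walk s' t'), q.IsPath → q.length ≤ p.length

theorem IsLongestPath.mem_support_of_adj {p : G.Walk s t} (hp : IsLongestPath p) {v : V}
    (hv : G.Adj s v) : v ∈ p.support := by
  by_contra hmem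
  have := hp.length_le (.cons hv.symm p) (hp.isPath.cons hmem)
  simp at this

theorem IsLongestPath.exists_adj_getVert [Fintype (G.neighborSet s)] {p : G.Walk s t}
    (hp : IsLongestPath p) {A : Finset ℕ} (hA : A.card < G.degree s) :
    ∃ j ≤ p.length, j ≠ 0 ∧ j ∉ A ∧ G.Adj s (p.getVert j) := by
  obtain ⟨v, hv, hvA⟩ : ∃ v ∈ G.neighborFinset s, v ∉ A.image p.getVert :=
    Finset.exists_mem_notMem_of_card_lt_card (Finset.card_image_le.trans_lt hA)
  have hsv : G.Adj s v := by simpa using hv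
  obtain ⟨j, rfl, hj⟩ :=
    SimpleGraph.Walk.mem_support_iff_exists_getVert.1 (hp.mem_support_of_adj hsv)
  refine ⟨j, hj, ?_, fun hjA => hvA (Finset.mem_image_of_mem _ hjA), hsv⟩
  rintro rfl
  simp at hsv

/-- Pósa rotation: the chord from `s = p 0` to `p (a + 1)` allows the initial segment `p 0, …, p a`
to be reversed. -/
theorem IsLongestPath.exists_rotation {p : G.Walk s t} (hp : IsLongestPath p) {a : ℕ}
    (ha : a < p.length) (hadj : G.Adj s (p.getVert (a + 1))) :
    ∃ q : G.Walk (p.getVert a) t, IsLongestPath q ∧ q.length = p.length ∧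
      (∀ i ≤ a, q.getVert i = p.getVert (a - i)) ∧ ∀ i, a < i → q.getVert i = p.getVert i := by
  let q := (p.take a).reverse.append (.cons hadj (p.drop (a + 1)))
  have hlen_take : (p.take a).reverse.length = a := by simp [ha.le]
  have hlen : q.length = p.length := by
    simp only [q, SimpleGraph.Walk.length_append, SimpleGraph.Walk.length_reverse,
      SimpleGraph.Walk.take_length, SimpleGraph.Walk.length_cons, SimpleGraph.Walk.drop_length]
    omega
  have hperm : q.support.Perm p.support := by
    have htake : q.support = (p.support.take (a + 1)).reverse ++ p.support.drop (a + 1) := by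
      simp [q, SimpleGraph.Walk.support_append, SimpleGraph.Walk.support_take,
        SimpleGraph.Walk.drop_support_eq_support_drop_min, Nat.min_eq_left ha]
    rw [htake]
    simpa using (List.reverse_perm (p.support.take (a + 1))).append_right (p.support.drop (a + 1))
  refine ⟨q, ⟨?_, fun r hr => hlen ▸ hp.length_le r hr⟩, hlen, fun i hi => ?_, fun i hi => ?_⟩
  · rw [SimpleGraph.Walk.isPath_def, hperm.nodup_iff]
    exact hp.isPath.support_nodup
  · rw [SimpleGraph.Walk.getVert_append, hlen_take]
    obtain hia | rfl := hi.lt_or_eq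
    · simp [hia, SimpleGraph.Walk.getVert_reverse, ha.le]
    · simp
  · obtain ⟨k, rfl⟩ := Nat.exists_eq_add_of_lt hi
    rw [SimpleGraph.Walk.getVert_append, hlen_take, if_neg (by omega),
      show a + k + 1 - a = k + 1 by omega, SimpleGraph.Walk.getVert_cons_succ,
      SimpleGraph.Walk.drop_getVert]
    congr 1; omega

theorem hasMinor_two_three_of_nested_chords {p : G.Walk s t} (hp : p.IsPath) {a j b : ℕ}
    (ha : 1 ≤ a) (haj : a + 1 < j) (hjb : j < b) (hb : b ≤ p.length)
    (hadj_succ : G.Adj s (p.getVert (a + 1))) (hadj_b : G.Adj s (p.getVert b))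
    (hadj_j : G.Adj (p.getVert a) (p.getVert j)) :
    HasMinor G (completeBipartiteGraph (Fin 2) (Fin 3)) := by
  have hpath {i : ℕ} (hi : i < p.length) : G.Adj (p.getVert i) (p.getVert (i + 1)) :=
    p.adj_getVert_succ hi
  refine hasMinor_of_path_intervals hp (l := Sum.elim ![0, a + 2] ![1, a + 1, b])
    (r := Sum.elim ![0, b - 1] ![a, a + 1, b]) ?_ ?_ ?_ ?_
  · rintro (x | x) <;> fin_cases x <;> dsimp <;> omega
  · rintro (x | x) <;> fin_cases x <;> dsimp <;> omega
  · rintro (x | x) (y | y) hxy <;> fin_cases x <;> fin_cases y <;>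
      first | exact absurd rfl hxy | (dsimp; omega)
  · intro x y
    simp only [Set.mem_Icc]
    fin_cases x <;> fin_cases y <;> dsimp
    · exact ⟨0, by omega, 1, by omega, hpath (by omega)⟩
    · exact ⟨0, by omega, a + 1, by omega, by simpa using hadj_succ⟩
    · exact ⟨0, by omega, b, by omega, by simpa using hadj_b⟩
    · exact ⟨j, by omega, a, by omega, hadj_j.symm⟩
    · exact ⟨a + 2, by omega, a + 1, by omega, (hpath (by omega)).symm⟩
    · obtain ⟨k, rfl⟩ := Nat.exists_eq_add_of_lt hjb
      exact ⟨j + k, by omega, j + k + 1, by omega, hpath (by omega)⟩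

theorem hasMinor_two_three_of_crossing_chords {p : G.Walk s t} (hp : p.IsPath) {a b j : ℕ}
    (ha : 1 ≤ a) (hab : a + 1 < b) (hbj : b < j) (hj : j ≤ p.length)
    (hadj_b : G.Adj s (p.getVert b)) (hadj_j : G.Adj (p.getVert a) (p.getVert j)) :
    HasMinor G (completeBipartiteGraph (Fin 2) (Fin 3)) := by
  have hpath {i : ℕ} (hi : i < p.length) : G.Adj (p.getVert i) (p.getVert (i + 1)) :=
    p.adj_getVert_succ hi
  refine hasMinor_of_path_intervals hp (l := Sum.elim ![1, a + 2] ![0, a + 1, b + 1])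
    (r := Sum.elim ![a, b] ![0, a + 1, j]) ?_ ?_ ?_ ?_
  · rintro (x | x) <;> fin_cases x <;> dsimp <;> omega
  · rintro (x | x) <;> fin_cases x <;> dsimp <;> omega
  · rintro (x | x) (y | y) hxy <;> fin_cases x <;> fin_cases y <;>
      first | exact absurd rfl hxy | (dsimp; omega)
  · intro x y
    simp only [Set.mem_Icc]
    fin_cases x <;> fin_cases y <;> dsimp
    · exact ⟨1, by omega, 0, by omega, (hpath (by omega)).symm⟩
    · exact ⟨a, by omega, a + 1, by omega, hpath (by omega)⟩
    · exact ⟨a, by omega, j, by omega, hadj_j⟩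
    · exact ⟨b, by omega, 0, by omega, by simpa using hadj_b.symm⟩
    · exact ⟨a + 2, by omega, a + 1, by omega, (hpath (by omega)).symm⟩
    · exact ⟨b, by omega, b + 1, by omega, hpath (by omega)⟩

theorem exists_isLongestPath [Nonempty V] (G : SimpleGraph V) [Finite G.edgeSet] :
    ∃ (s t : V) (p : G.Walk s t), IsLongestPath p := by
  obtain ⟨s, t, p, hp, hmax⟩ := SimpleGraph.Walk.exists_isPath_forall_isPath_length_le_length G
  exact ⟨s, t, p, hp, fun q hq => hmax _ _ q hq⟩

/-- Among all longest paths `p` and all neighbours `p (a + 1)` of their starting points, choose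
`a ≥ 1` minimal. Rotating `p` there gives a longest path from `p a`, so by minimality the
neighbours of `p a` other than `p (a - 1)` and `p (a + 1)` come after `p (a + 1)`. -/
theorem hasMinor_two_three_of_four_le_degree [Nonempty V] [Finite G.edgeSet] [G.LocallyFinite]
    (hdeg : ∀ v, 4 ≤ G.degree v) : HasMinor G (completeBipartiteGraph (Fin 2) (Fin 3)) := by
  let HasChord (a : ℕ) : Prop := 1 ≤ a ∧ ∃ (s t : V) (p : G.Walk s t),
    IsLongestPath p ∧ a + 1 ≤ p.length ∧ G.Adj s (p.getVert (a + 1))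
  have hchord {s t : V} {p : G.Walk s t} (hp : IsLongestPath p) {A : Finset ℕ} (hA : A.card < 3) :
      ∃ j, j ∉ A ∧ HasChord (j - 1) ∧ 1 < j ∧ j ≤ p.length ∧ G.Adj s (p.getVert j) := by
    obtain ⟨j, hj, hj₀, hjA, hadj⟩ := hp.exists_adj_getVert (A := insert 1 A) <|
      (Finset.card_insert_le 1 A).trans_lt (by have := hdeg s; omega)
    simp only [Finset.mem_insert, not_or] at hjA
    have hj₁ : j - 1 + 1 = j := by omega
    exact ⟨j, hjA.2, ⟨by omega, s, t, p, hp, by omega, by rwa [hj₁]⟩, by omega, hj, hadj⟩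
  have hex : ∃ a, HasChord a := by
    obtain ⟨s, t, p, hp⟩ := exists_isLongestPath G
    obtain ⟨j, -, hj, -⟩ := hchord hp (A := ∅) (by simp)
    exact ⟨j - 1, hj⟩
  obtain ⟨a, ⟨ha, s, t, p, hp, hap, hadj_succ⟩, hmin⟩ :
      ∃ a, HasChord a ∧ ∀ a', HasChord a' → a ≤ a' :=
    ⟨Nat.find hex, Nat.find_spec hex, fun _ => Nat.find_min' hex⟩
  obtain ⟨b, hbA, hb_chord, hb₁, hb, hadj_b⟩ := hchord hp (A := {a + 1}) (by simp)
  obtain ⟨q, hq, hlen, -, hq_getVert⟩ := hp.exists_rotation hap hadj_succ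
  obtain ⟨j, hjA, hj_chord, hj₁, hj, hadj_j⟩ := hchord hq (A := {a + 1, b})
    (Finset.card_le_two.trans_lt (by simp))
  simp only [Finset.mem_insert, Finset.mem_singleton, not_or] at hbA hjA
  have hab : a + 1 < b := by have := hmin _ hb_chord; omega
  have haj : a + 1 < j := by have := hmin _ hj_chord; omega
  rw [hq_getVert j (by omega)] at hadj_j
  obtain hjb | hbj := Nat.lt_or_gt_of_ne hjA.2
  · exact hasMinor_two_three_of_nested_chords hp.isPath ha haj hjb hb hadj_succ hadj_b hadj_j
  · exact hasMinor_two_three_of_crossing_chords hp.isPath ha hab hbj (by omega) hadj_b hadj_j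

end PathRotation

section EdgeContraction

variable {V : Type*} {G : SimpleGraph V}

theorem exists_adj_ncard_commonNeighbors_lt_four [Finite V]
    (hfree : ¬ HasMinor G (completeBipartiteGraph (Fin 3) (Fin 3))) (hG : G ≠ ⊥) :
    ∃ u v, G.Adj u v ∧ (G.commonNeighbors u v).ncard < 4 := by
  obtain ⟨z, y, hzy⟩ := SimpleGraph.ne_bot_iff_exists_adj.1 hG
  contrapose! hfree
  have := Fintype.ofFinite V
  have : Nonempty (G.neighborSet z) := ⟨⟨y, hzy⟩⟩
  refine HasMinor.cone (z := z) (hasMinor_two_three_of_four_le_degree fun v => ?_)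
  have himage : Subtype.val '' (G.induce (G.neighborSet z)).neighborSet v =
      G.commonNeighbors z v := by
    ext x
    simp [SimpleGraph.mem_commonNeighbors, and_comm]
  rw [← SimpleGraph.card_neighborSet_eq_degree, ← Nat.card_eq_fintype_card,
    Nat.card_coe_set_eq, ← Set.ncard_image_of_injective _ Subtype.val_injective, himage]
  exact hfree z v v.2

theorem ncard_edgeSet_contractEdge_lt [Finite V] {u v : V} (huv : G.Adj u v) :
    (contractEdge G u v).edgeSet.ncard < G.edgeSet.ncard := by
  have hsubset : (contractEdge G u v).edgeSet ⊆
      Sym2.map (update id v u) '' (G.edgeSet \ {s(u, v)}) := by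
    intro e he
    induction e with | _ x y
    obtain ⟨hne, a, b, hab, rfl, rfl⟩ := he
    refine ⟨s(a, b), ⟨hab, fun heq => hne ?_⟩, rfl⟩
    rcases Sym2.eq_iff.1 (Set.mem_singleton_iff.1 heq) with ⟨rfl, rfl⟩ | ⟨rfl, rfl⟩ <;>
      simp [hab.ne, hab.ne.symm]
  calc (contractEdge G u v).edgeSet.ncard
      ≤ (Sym2.map (update id v u) '' (G.edgeSet \ {s(u, v)})).ncard := Set.ncard_le_ncard hsubset
    _ ≤ (G.edgeSet \ {s(u, v)}).ncard := Set.ncard_image_le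
    _ < G.edgeSet.ncard := Set.ncard_sdiff_singleton_lt_of_mem huv

end EdgeContraction

/-- Every finite simple graph with no `K_{3,3}` minor is generically `4`-stress free. -/
theorem k33MinorFree_genericallyFourStressFree {V : Type*} [Fintype V] (G : SimpleGraph V)
    (hfree : ¬ HasMinor G (completeBipartiteGraph (Fin 3) (Fin 3))) :
    GenericallyStressFree G 4 := by
  have hK33 (i) : ∃ j, (completeBipartiteGraph (Fin 3) (Fin 3)).Adj i j := by
    rcases i with i | i
    exacts [⟨.inr 0, by simp⟩, ⟨.inl 0, by simp⟩]
  induction hn : G.edgeSet.ncard using Nat.strong_induction_on generalizing G with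
  | _ n ih =>
    subst hn
    obtain rfl | hG := eq_or_ne G ⊥
    · exact genericallyStressFree_bot 4
    · obtain ⟨u, v, huv, hcard⟩ := exists_adj_ncard_commonNeighbors_lt_four hfree hG
      exact .of_contractEdge huv.ne hcard <| ih _ (ncard_edgeSet_contractEdge_lt huv)
        (contractEdge G u v) (fun h => hfree (h.of_contractEdge huv hK33)) rfl
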